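/- For every natural number N there exists a finite connected simple graph G that is 3-regular (cubic), 2-connected, has more than N vertices, and contains at least two distinct Šoltés vertices. Consequently, there exist infinitely many cubic 2-connected graphs with at least two Šoltés vertices. -/

import Mathlib

open SimpleGraph Finset

/-- A `Fintype` instance for the vertex set of a vertex-deleted subgraph. -/
noncomputable instance instFintypeNe {V : Type*} [Fintype V] (v : V) :
    Fintype {u : V // u ≠ v} :=
  (Set.toFinite {u : V | u ≠ v}).fintype

/-- The graph obtained from `G` by deleting the vertex `v` (an induced subgraph). -/
def deleteVertex {V : Type*} (G : SimpleGraph V) (v : V) :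
    SimpleGraph {u : V // u ≠ v} :=
  G.induce {u : V | u ≠ v}

/-- The Wiener index of a finite simple graph: the sum of distances over all
unordered pairs of vertices. -/
noncomputable def wiener {V : Type*} [Fintype V] (G : SimpleGraph V) : ℕ :=
  (∑ u : V, ∑ v : V, G.dist u v) / 2

/-- `v` is a Šoltés vertex of `G` if `G - v` is connected and has the same Wiener index. -/
def IsSoltes {V : Type*} [Fintype V] (G : SimpleGraph V) (v : V) : Prop :=
  (deleteVertex G v).Connected ∧ wiener (deleteVertex G v) = wiener G

/-- A graph is cubic (3-regular) if every vertex has exactly 3 neighbours. -/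
def IsCubic {V : Type*} (G : SimpleGraph V) : Prop :=
  ∀ v : V, (G.neighborSet v).ncard = 3

/-- A finite graph is 2-connected if it is connected, has at least 3 vertices,
and stays connected after deleting any one vertex. -/
def TwoConnected {V : Type*} [Fintype V] (G : SimpleGraph V) : Prop :=
  G.Connected ∧ 3 ≤ Fintype.card V ∧ ∀ v : V, (deleteVertex G v).Connected


def As (k t u : ℕ) : Prop :=
  u = t + 1 ∨ t = u + 1 ∨ (t + 1 = k ∧ u = k + 1) ∨ (u + 1 = k ∧ t = k + 1)

def Ac (k m t u : ℕ) : Prop :=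
  (t = u ∧ t ≠ 1 ∧ t + 1 ≠ k ∧ t ≠ k + 1 ∧ t ≠ k + 2 ∧ t ≠ k + 3 ∧ t + 2 ≠ m) ∨
  (u = t + 1 ∧ (t = 0 ∨ t = k + 2 ∨ t + 2 = m)) ∨
  (t = u + 1 ∧ (u = 0 ∨ u = k + 2 ∨ u + 2 = m))

def fs0 (k t u : ℕ) : ℕ := if t < k ∧ k < u then u - t - 1 else u - t
def fs (k t u : ℕ) : ℕ := if t ≤ u then fs0 k t u else fs0 k u t
def ex (k m t u : ℕ) : ℕ :=
  if t = u then
    (if t + 1 = k ∨ t = k + 1 then 3 else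
      if t = 1 ∨ t = k + 2 ∨ t = k + 3 ∨ t + 2 = m then 2 else 1)
  else if t = 0 ∨ u + 1 = m ∨ (t ≤ k + 2 ∧ k + 2 < u) then 0
  else if (t + 1 = k ∧ (u = k + 1 ∨ u = k + 2)) ∨ (t = k + 1 ∧ u = k + 2) then 2 else 1
def fc (k m t u : ℕ) : ℕ := if t ≤ u then fs0 k t u + ex k m t u else fs0 k u t + ex k m u t


def Aj (k m t : ℕ) (a : Bool) (u : ℕ) (b : Bool) : Prop := if a = b then As k t u else Ac k m t u
def ff (k m t : ℕ) (a : Bool) (u : ℕ) (b : Bool) : ℕ := if a = b then fs k t u else fc k m t u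
/-- increment of the distance after deleting the vertex (k+1, true), for t < u -/
def inc0 (k t : ℕ) (a : Bool) (u : ℕ) (b : Bool) : ℕ :=
  if k < t then 0 else if k + 2 < u then
    (if a = true then (if t = 0 then 0 else if t + 1 = k then 2 else 1) else 0)
  else if u = k + 2 then
    (if b = true then
      (if a = true then (if t = 0 then 2 else if t + 1 = k then 4 else 3)
       else (if t = 0 then 2 else if t + 1 = k then 0 else 1))
     else 0)
  else 0
def inc (k t : ℕ) (a : Bool) (u : ℕ) (b : Bool) : ℕ :=
  if t < u then inc0 k t a u b else if u < t then inc0 k u b t a else 0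
def gg (k m t : ℕ) (a : Bool) (u : ℕ) (b : Bool) : ℕ := ff k m t a u b + inc k t a u b
/-- step predicates -/
def St (k m t : ℕ) (a : Bool) (u : ℕ) (b : Bool) (w : ℕ) (c : Bool) : Prop :=
  w < m ∧ Aj k m u b w c ∧ ff k m t a w c + 1 = ff k m t a u b
def Sg (k m t : ℕ) (a : Bool) (u : ℕ) (b : Bool) (w : ℕ) (c : Bool) : Prop :=
  w < m ∧ ¬ (w = k + 1 ∧ c = true) ∧ Aj k m u b w c ∧ gg k m t a w c + 1 = gg k m t a u b
set_option maxHeartbeats 1000000 in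
theorem lipf (k m t u w : ℕ) (a b c : Bool) (hk : 6 ≤ k) (hm : k + 8 ≤ m) (ht : t < m) (hu : u < m)
    (hw : w < m) (h : Aj k m u b w c) : ff k m t a w c ≤ ff k m t a u b + 1 := by
  cases a <;> cases b <;> cases c <;>
    simp only [Aj, As, Ac, reduceCtorEq, if_true, if_false] at h <;>
    simp only [ff, reduceCtorEq, if_true, if_false] <;>
    rcases h with h | h | h <;>
    rcases lt_trichotomy t u with h3 | h3 | h3 <;> simp only [fs, fc, ex, fs0] <;>
    grind (splits := 40)

set_option maxHeartbeats 1000000 in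
theorem lipg (k m t u w : ℕ) (a b c : Bool) (hk : 6 ≤ k) (hm : k + 8 ≤ m) (ht : t < m) (hu : u < m)
    (hw : w < m) (e1 : ¬ (t = k + 1 ∧ a = true)) (e2 : ¬ (u = k + 1 ∧ b = true))
    (e3 : ¬ (w = k + 1 ∧ c = true))
    (h : Aj k m u b w c) : gg k m t a w c ≤ gg k m t a u b + 1 := by
  cases a <;> cases b <;> cases c <;>
    simp only [Aj, As, Ac, reduceCtorEq, if_true, if_false] at h <;>
    simp only [gg, ff, inc, inc0, reduceCtorEq, if_true, if_false] <;>
    simp only [reduceCtorEq, and_true, and_false, not_false_eq_true] at e1 e2 e3 <;>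
    rcases h with h | h | h <;>
    rcases lt_trichotomy t u with h3 | h3 | h3 <;> simp only [fs, fc, ex, fs0] <;>
    grind (splits := 40)

theorem desf_tt_lt (k m t u : ℕ) (hk : 6 ≤ k) (hm : k + 8 ≤ m) (ht : t < m) (hu : u < m)
    (htu : t < u) :
    St k m t true u true (u - 1) true ∨
    St k m t true u true (k - 1) true := by
  simp only [St, Aj, As, Ac, ff, reduceCtorEq, if_true, if_false]
  simp only [fs, fc, ex, fs0]
  grind (splits := 40)

theorem desf_tt_gt (k m t u : ℕ) (hk : 6 ≤ k) (hm : k + 8 ≤ m) (ht : t < m) (hu : u < m)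
    (htu : u < t) :
    St k m t true u true (u + 1) true ∨
    St k m t true u true (k + 1) true := by
  simp only [St, Aj, As, Ac, ff, reduceCtorEq, if_true, if_false]
  simp only [fs, fc, ex, fs0]
  grind (splits := 40)

theorem desf_tf_lt (k m t u : ℕ) (hk : 6 ≤ k) (hm : k + 8 ≤ m) (ht : t < m) (hu : u < m)
    (htu : t < u) :
    St k m t true u false (u - 1) false ∨
    St k m t true u false (u + 1) false ∨
    St k m t true u false (k - 1) false ∨
    St k m t true u false (u) true ∨
    St k m t true u false (u - 1) true := by
  simp only [St, Aj, As, Ac, ff, reduceCtorEq, if_true, if_false]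
  simp only [fs, fc, ex, fs0]
  grind (splits := 40)

theorem desf_tf_eq (k m t u : ℕ) (hk : 6 ≤ k) (hm : k + 8 ≤ m) (ht : t < m) (hu : u < m)
    (htu : t = u) :
    St k m t true u false (u - 1) false ∨
    St k m t true u false (u + 1) false ∨
    St k m t true u false (u) true := by
  simp only [St, Aj, As, Ac, ff, reduceCtorEq, if_true, if_false]
  simp only [fs, fc, ex, fs0]
  grind (splits := 40)

theorem desf_tf_gt (k m t u : ℕ) (hk : 6 ≤ k) (hm : k + 8 ≤ m) (ht : t < m) (hu : u < m)
    (htu : u < t) :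
    St k m t true u false (u + 1) false ∨
    St k m t true u false (k + 1) false ∨
    St k m t true u false (u) true ∨
    St k m t true u false (u + 1) true := by
  simp only [St, Aj, As, Ac, ff, reduceCtorEq, if_true, if_false]
  simp only [fs, fc, ex, fs0]
  grind (splits := 40)

theorem desg_tt_lt (k m t u : ℕ) (hk : 6 ≤ k) (hm : k + 8 ≤ m) (ht : t < m) (hu : u < m) (e1 : t ≠ k + 1) (e2 : u ≠ k + 1)
    (htu : t < u) :
    Sg k m t true u true (u - 1) true ∨
    Sg k m t true u true (u + 1) true ∨
    Sg k m t true u true (u - 1) false := by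
  simp only [Sg, Aj, As, Ac, gg, ff, inc, inc0, reduceCtorEq, if_true, if_false]
  simp only [fs, fc, ex, fs0]
  grind (splits := 40)

theorem desg_tt_gt (k m t u : ℕ) (hk : 6 ≤ k) (hm : k + 8 ≤ m) (ht : t < m) (hu : u < m) (e1 : t ≠ k + 1) (e2 : u ≠ k + 1)
    (htu : u < t) :
    Sg k m t true u true (u + 1) true ∨
    Sg k m t true u true (u) false ∨
    Sg k m t true u true (u + 1) false := by
  simp only [Sg, Aj, As, Ac, gg, ff, inc, inc0, reduceCtorEq, if_true, if_false]
  simp only [fs, fc, ex, fs0]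
  grind (splits := 40)

theorem desg_tf_lt (k m t u : ℕ) (hk : 6 ≤ k) (hm : k + 8 ≤ m) (ht : t < m) (hu : u < m) (e1 : t ≠ k + 1)
    (htu : t < u) :
    Sg k m t true u false (u - 1) false ∨
    Sg k m t true u false (k - 1) false ∨
    Sg k m t true u false (u) true ∨
    Sg k m t true u false (u - 1) true := by
  simp only [Sg, Aj, As, Ac, gg, ff, inc, inc0, reduceCtorEq, if_true, if_false]
  simp only [fs, fc, ex, fs0]
  grind (splits := 40)

theorem desg_tf_eq (k m t u : ℕ) (hk : 6 ≤ k) (hm : k + 8 ≤ m) (ht : t < m) (hu : u < m) (e1 : t ≠ k + 1)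
    (htu : t = u) :
    Sg k m t true u false (u - 1) false ∨
    Sg k m t true u false (u + 1) false ∨
    Sg k m t true u false (u) true := by
  simp only [Sg, Aj, As, Ac, gg, ff, inc, inc0, reduceCtorEq, if_true, if_false]
  simp only [fs, fc, ex, fs0]
  grind (splits := 40)

theorem desg_tf_gt (k m t u : ℕ) (hk : 6 ≤ k) (hm : k + 8 ≤ m) (ht : t < m) (hu : u < m) (e1 : t ≠ k + 1)
    (htu : u < t) :
    Sg k m t true u false (u + 1) false ∨
    Sg k m t true u false (k + 1) false ∨
    Sg k m t true u false (u) true ∨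
    Sg k m t true u false (u + 1) true := by
  simp only [Sg, Aj, As, Ac, gg, ff, inc, inc0, reduceCtorEq, if_true, if_false]
  simp only [fs, fc, ex, fs0]
  grind (splits := 40)

theorem desg_ft_lt (k m t u : ℕ) (hk : 6 ≤ k) (hm : k + 8 ≤ m) (ht : t < m) (hu : u < m) (e2 : u ≠ k + 1)
    (htu : t < u) :
    Sg k m t false u true (u - 1) true ∨
    Sg k m t false u true (u + 1) true ∨
    Sg k m t false u true (u) false ∨
    Sg k m t false u true (u - 1) false := by
  simp only [Sg, Aj, As, Ac, gg, ff, inc, inc0, reduceCtorEq, if_true, if_false]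
  simp only [fs, fc, ex, fs0]
  grind (splits := 40)

theorem desg_ft_eq (k m t u : ℕ) (hk : 6 ≤ k) (hm : k + 8 ≤ m) (ht : t < m) (hu : u < m) (e2 : u ≠ k + 1)
    (htu : t = u) :
    Sg k m t false u true (u - 1) true ∨
    Sg k m t false u true (u + 1) true ∨
    Sg k m t false u true (u) false := by
  simp only [Sg, Aj, As, Ac, gg, ff, inc, inc0, reduceCtorEq, if_true, if_false]
  simp only [fs, fc, ex, fs0]
  grind (splits := 40)

theorem desg_ft_gt (k m t u : ℕ) (hk : 6 ≤ k) (hm : k + 8 ≤ m) (ht : t < m) (hu : u < m) (e2 : u ≠ k + 1)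
    (htu : u < t) :
    Sg k m t false u true (u + 1) true ∨
    Sg k m t false u true (u) false ∨
    Sg k m t false u true (u + 1) false := by
  simp only [Sg, Aj, As, Ac, gg, ff, inc, inc0, reduceCtorEq, if_true, if_false]
  simp only [fs, fc, ex, fs0]
  grind (splits := 40)

theorem desg_ff_lt (k m t u : ℕ) (hk : 6 ≤ k) (hm : k + 8 ≤ m) (ht : t < m) (hu : u < m)
    (htu : t < u) :
    Sg k m t false u false (u - 1) false ∨
    Sg k m t false u false (k - 1) false := by
  simp only [Sg, Aj, As, Ac, gg, ff, inc, inc0, reduceCtorEq, if_true, if_false]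
  simp only [fs, fc, ex, fs0]
  grind (splits := 40)

theorem desg_ff_gt (k m t u : ℕ) (hk : 6 ≤ k) (hm : k + 8 ≤ m) (ht : t < m) (hu : u < m)
    (htu : u < t) :
    Sg k m t false u false (u + 1) false ∨
    Sg k m t false u false (k + 1) false := by
  simp only [Sg, Aj, As, Ac, gg, ff, inc, inc0, reduceCtorEq, if_true, if_false]
  simp only [fs, fc, ex, fs0]
  grind (splits := 40)

theorem desf (k m t u : ℕ) (a b : Bool) (hk : 6 ≤ k) (hm : k + 8 ≤ m) (ht : t < m) (hu : u < m)
    (h : ¬ (t = u ∧ a = b)) : ∃ w c, St k m t a u b w c := by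
  have hflip : (∃ w c, St k m t true u false w c) → ∃ w c, St k m t false u true w c := by
    rintro ⟨w, c, h⟩
    refine ⟨w, !c, ?_⟩
    cases c <;> simpa [St, Aj, ff] using h
  have hflipP : (∃ w c, St k m t true u true w c) → ∃ w c, St k m t false u false w c := by
    rintro ⟨w, c, h⟩
    refine ⟨w, !c, ?_⟩
    cases c <;> simpa [St, Aj, ff] using h
  have h1 : t ≠ u → ∃ w c, St k m t true u true w c := by
    intro hne
    rcases lt_trichotomy t u with h3 | h3 | h3
    · rcases desf_tt_lt k m t u hk hm ht hu h3 with h | h <;> exact ⟨_, _, h⟩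
    · exact absurd h3 hne
    · rcases desf_tt_gt k m t u hk hm ht hu h3 with h | h <;> exact ⟨_, _, h⟩
  have h2 : ∃ w c, St k m t true u false w c := by
    rcases lt_trichotomy t u with h3 | h3 | h3
    · rcases desf_tf_lt k m t u hk hm ht hu h3 with h | h | h | h | h <;> exact ⟨_, _, h⟩
    · rcases desf_tf_eq k m t u hk hm ht hu h3 with h | h | h <;> exact ⟨_, _, h⟩
    · rcases desf_tf_gt k m t u hk hm ht hu h3 with h | h | h | h <;> exact ⟨_, _, h⟩
  cases a <;> cases b
  · exact hflipP (h1 (by simpa using h))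
  · exact hflip h2
  · exact h2
  · exact h1 (by simpa using h)

theorem desg (k m t u : ℕ) (a b : Bool) (hk : 6 ≤ k) (hm : k + 8 ≤ m) (ht : t < m) (hu : u < m)
    (e1 : ¬ (t = k + 1 ∧ a = true)) (e2 : ¬ (u = k + 1 ∧ b = true))
    (h : ¬ (t = u ∧ a = b)) : ∃ w c, Sg k m t a u b w c := by
  cases a <;> cases b <;> rcases lt_trichotomy t u with h3 | h3 | h3
  · rcases desg_ff_lt k m t u hk hm ht hu h3 with h | h <;> exact ⟨_, _, h⟩
  · exact absurd ⟨h3, rfl⟩ h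
  · rcases desg_ff_gt k m t u hk hm ht hu h3 with h | h <;> exact ⟨_, _, h⟩
  · rcases desg_ft_lt k m t u hk hm ht hu (by simpa using e2) h3 with h | h | h | h <;> exact ⟨_, _, h⟩
  · rcases desg_ft_eq k m t u hk hm ht hu (by simpa using e2) h3 with h | h | h <;> exact ⟨_, _, h⟩
  · rcases desg_ft_gt k m t u hk hm ht hu (by simpa using e2) h3 with h | h | h <;> exact ⟨_, _, h⟩
  · rcases desg_tf_lt k m t u hk hm ht hu (by simpa using e1) h3 with h | h | h | h <;> exact ⟨_, _, h⟩
  · rcases desg_tf_eq k m t u hk hm ht hu (by simpa using e1) h3 with h | h | h <;> exact ⟨_, _, h⟩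
  · rcases desg_tf_gt k m t u hk hm ht hu (by simpa using e1) h3 with h | h | h | h <;> exact ⟨_, _, h⟩
  · rcases desg_tt_lt k m t u hk hm ht hu (by simpa using e1) (by simpa using e2) h3 with h | h | h <;> exact ⟨_, _, h⟩
  · exact absurd ⟨h3, rfl⟩ h
  · rcases desg_tt_gt k m t u hk hm ht hu (by simpa using e1) (by simpa using e2) h3 with h | h | h <;> exact ⟨_, _, h⟩



/-- A function with the local properties of the distance is the distance. -/
theorem dist_of_local {V : Type*} (G : SimpleGraph V) (f : V → V → ℕ)
    (h0 : ∀ x, f x x = 0) (hl : ∀ x y z, G.Adj y z → f x z ≤ f x y + 1)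
    (hd : ∀ x y, x ≠ y → ∃ z, G.Adj y z ∧ f x z + 1 = f x y) (x y : V) :
    G.Reachable x y ∧ G.dist x y = f x y := by
  have up : ∀ n, ∀ y, f x y = n → ∃ p : G.Walk x y, p.length ≤ n := by
    intro n
    induction n with
    | zero =>
      intro y hy
      by_cases hxy : x = y
      · subst hxy
        exact ⟨Walk.nil, le_rfl⟩
      · obtain ⟨z, _, h⟩ := hd x y hxy
        omega
    | succ n ih =>
      intro y hy
      by_cases hxy : x = y
      · subst hxy
        rw [h0] at hy
        omega
      · obtain ⟨z, hz, h⟩ := hd x y hxy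
        obtain ⟨p, hp⟩ := ih z (by omega)
        refine ⟨p.concat hz.symm, ?_⟩
        rw [Walk.length_concat]
        omega
  have low : ∀ {a b : V} (p : G.Walk a b), f x b ≤ f x a + p.length := by
    intro a b p
    induction p with
    | nil => simp
    | cons h p ih =>
      have := hl x _ _ h
      rw [Walk.length_cons]
      omega
  obtain ⟨p, hp⟩ := up _ y rfl
  refine ⟨⟨p⟩, ?_⟩
  apply le_antisymm
  · exact (SimpleGraph.dist_le p).trans hp
  · obtain ⟨q, hq⟩ := (Reachable.exists_walk_length_eq_dist ⟨p⟩ : ∃ q : G.Walk x y, q.length = G.dist x y)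
    have := low q
    rw [h0, hq] at this
    omega

theorem connected_of_reach {V : Type*} [Nonempty V] (G : SimpleGraph V)
    (h : ∀ x y, G.Reachable x y) : G.Connected := ⟨h⟩

/-- Deleting a vertex of a Hamiltonian graph leaves a connected graph. -/
theorem ham_delete {V : Type*} (G : SimpleGraph V) (n : ℕ) (hn : 2 ≤ n) (c : ℕ → V)
    (hs : ∀ x, ∃ i, i < n ∧ c i = x) (hi : ∀ i j, i < n → j < n → c i = c j → i = j)
    (ha : ∀ i, i + 1 < n → G.Adj (c i) (c (i + 1))) (hc : G.Adj (c (n - 1)) (c 0)) (v : V) :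
    (G.induce {u | u ≠ v}).Connected := by
  obtain ⟨j, hj, rfl⟩ := hs v
  -- shifted enumeration
  let d : ℕ → V := fun i => if j + i < n then c (j + i) else c (j + i - n)
  have dadj : ∀ i, i + 1 < n → G.Adj (d i) (d (i + 1)) := by
    intro i hiP
    simp only [d]
    by_cases h1 : j + (i + 1) < n
    · rw [if_pos (by omega), if_pos h1]
      exact ha _ (by omega)
    · by_cases h2 : j + i < n
      · rw [if_pos h2, if_neg h1]
        have e1 : j + i = n - 1 := by omega
        have e2 : j + (i + 1) - n = 0 := by omega
        rw [e1, e2]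
        exact hc
      · rw [if_neg h2, if_neg h1]
        have e2 : j + (i + 1) - n = (j + i - n) + 1 := by omega
        rw [e2]
        exact ha _ (by omega)
  have dne : ∀ i, 1 ≤ i → i < n → d i ≠ c j := by
    intro i h1 h2 h
    simp only [d] at h
    split_ifs at h with h3
    · have := hi _ _ h3 hj h
      omega
    · have := hi _ _ (by omega) hj h
      omega
  have dsurj : ∀ x, x ≠ c j → ∃ i, 1 ≤ i ∧ i < n ∧ d i = x := by
    intro x hx
    obtain ⟨i, hin, rfl⟩ := hs x
    have hij : i ≠ j := fun h => hx (by rw [h])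
    by_cases h : j < i
    · refine ⟨i - j, by omega, by omega, ?_⟩
      simp only [d]
      rw [if_pos (by omega)]
      congr 1
      omega
    · refine ⟨i + n - j, by omega, by omega, ?_⟩
      simp only [d]
      rw [if_neg (by omega)]
      congr 1
      omega
  have key : ∀ i, (h1 : 1 ≤ i) → (h2 : i < n) →
      (G.induce {u | u ≠ c j}).Reachable ⟨d 1, dne 1 le_rfl (by omega)⟩ ⟨d i, dne i h1 h2⟩ := by
    intro i h1
    induction i, h1 using Nat.le_induction with
    | base => intro _; exact Reachable.refl _
    | succ i h1 ih =>
      intro h2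
      refine (ih (by omega)).trans (Adj.reachable ?_)
      exact dadj i h2
  haveI : Nonempty {u | u ≠ c j} := ⟨⟨d 1, dne 1 le_rfl (by omega)⟩⟩
  refine connected_of_reach _ ?_
  have key2 : ∀ x : {u | u ≠ c j},
      (G.induce {u | u ≠ c j}).Reachable ⟨d 1, dne 1 le_rfl (by omega)⟩ x := by
    rintro ⟨x, hx⟩
    obtain ⟨i, h1, h2, rfl⟩ := dsurj x hx
    exact key i h1 h2
  intro x y
  exact (key2 x).symm.trans (key2 y)

theorem sum_two (m : ℕ) (F : ℕ → ℕ) :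
    ∑ x ∈ range (2 * m), F x = ∑ t ∈ range m, (F (2 * t) + F (2 * t + 1)) := by
  induction m with
  | zero => simp
  | succ m ih =>
    rw [show 2 * (m + 1) = 2 * m + 1 + 1 by ring, sum_range_succ, sum_range_succ, ih, sum_range_succ]
    ring

theorem sum_rows (m ρ : ℕ) (hρ : ρ < 2) (F : ℕ → Bool → ℕ) :
    ∑ x : Fin (2 * m), F ((x : ℕ) / 2) (decide ((x : ℕ) % 2 = ρ)) =
      ∑ t ∈ range m, (F t true + F t false) := by
  rw [Fin.sum_univ_eq_sum_range (fun x => F (x / 2) (decide (x % 2 = ρ))), sum_two]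
  refine sum_congr rfl fun t _ => ?_
  have h1 : 2 * t / 2 = t := by omega
  have h2 : (2 * t + 1) / 2 = t := by omega
  have h3 : 2 * t % 2 = 0 := by omega
  have h4 : (2 * t + 1) % 2 = 1 := by omega
  rw [h1, h2, h3, h4]
  interval_cases ρ
  · simp
  · simp [add_comm]

def JJ (k t u : ℕ) : ℕ := if t < u then inc0 k t true u true + inc0 k t true u false +
  inc0 k t false u true + inc0 k t false u false else 0

theorem JJ_eq (k t u : ℕ) (hk : 6 ≤ k) : JJ k t u = if k < t then 0 else
    if k + 2 < u then (if t = 0 then 0 else if t + 1 = k then 4 else 2) else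
    if u = k + 2 then 4 else 0 := by
  simp only [JJ, inc0, reduceCtorEq, if_true, if_false]
  split_ifs <;> omega

def BB (k Q t : ℕ) : ℕ := if k < t then 0 else
    4 + Q * (if t = 0 then 0 else if t + 1 = k then 4 else 2)

theorem JJ_sum (k Q t : ℕ) (hk : 6 ≤ k) : ∑ u ∈ range (k + 3 + Q), JJ k t u = BB k Q t := by
  induction Q with
  | zero =>
    rw [add_zero, show k + 3 = k + 2 + 1 by ring, sum_range_succ, sum_eq_zero]
    · rw [JJ_eq _ _ _ hk]
      simp [BB]
    · intro u hu
      rw [mem_range] at hu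
      rw [JJ_eq _ _ _ hk]
      split_ifs <;> omega
  | succ Q ih =>
    rw [← add_assoc, sum_range_succ, ih, JJ_eq _ _ _ hk]
    unfold BB
    split_ifs <;> first | omega | ring

theorem BB_sum (k Q : ℕ) (hk : 6 ≤ k) : ∑ t ∈ range (k + 3 + Q), BB k Q t = 2 * (k + 1) * (Q + 2) := by
  have h1 : ∀ j, ∑ t ∈ range (k + 1 + j), BB k Q t = ∑ t ∈ range (k + 1), BB k Q t := by
    intro j
    induction j with
    | zero => rfl
    | succ j ih =>
      rw [← add_assoc, sum_range_succ, ih]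
      have : BB k Q (k + 1 + j) = 0 := by
        unfold BB
        rw [if_pos (by omega)]
      rw [this, add_zero]
  have h2 : ∀ j, j + 2 ≤ k → ∑ t ∈ range (j + 1), BB k Q t = 4 * (j + 1) + 2 * Q * j := by
    intro j
    induction j with
    | zero => intro _; simp [BB]
    | succ j ih =>
      intro hj
      rw [sum_range_succ, ih (by omega)]
      have : BB k Q (j + 1) = 4 + Q * 2 := by
        unfold BB
        rw [if_neg (by omega), if_neg (by omega), if_neg (by omega)]
      rw [this]
      ring
  rw [show k + 3 + Q = k + 1 + (Q + 2) by ring, h1]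
  obtain ⟨j, rfl⟩ : ∃ j, k = j + 2 := ⟨k - 2, by omega⟩
  rw [sum_range_succ, show j + 2 = j + 1 + 1 by ring, sum_range_succ, h2 j (by omega)]
  have e1 : BB (j + 1 + 1) Q (j + 1) = 4 + Q * 4 := by
    unfold BB
    rw [if_neg (by omega), if_neg (by omega), if_pos (by omega)]
  have e2 : BB (j + 1 + 1) Q (j + 1 + 1) = 4 + Q * 2 := by
    unfold BB
    rw [if_neg (by omega), if_neg (by omega), if_neg (by omega)]
  rw [e1, e2]
  ring

theorem inc_sum (k Q : ℕ) (hk : 6 ≤ k) :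
    ∑ t ∈ range (k + 3 + Q),
      ((∑ u ∈ range (k + 3 + Q), (inc k t true u true + inc k t true u false)) +
       (∑ u ∈ range (k + 3 + Q), (inc k t false u true + inc k t false u false))) =
      4 * (k + 1) * (Q + 2) := by
  have h : ∀ t u, (inc k t true u true + inc k t true u false) +
      (inc k t false u true + inc k t false u false) = JJ k t u + JJ k u t := by
    intro t u
    unfold inc JJ
    split_ifs <;> omega
  have hP : ∑ t ∈ range (k + 3 + Q), ∑ u ∈ range (k + 3 + Q), JJ k t u = 2 * (k + 1) * (Q + 2) := by
    rw [← BB_sum k Q hk]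
    exact sum_congr rfl fun t _ => JJ_sum k Q t hk
  simp_rw [← sum_add_distrib, h, sum_add_distrib]
  rw [sum_comm (f := fun t u => JJ k u t), hP]
  ring

theorem trans_sum (k Q : ℕ) (hk : 6 ≤ k) (hQ : 5 ≤ Q) :
    ∑ u ∈ range (k + 3 + Q), (ff k (k + 3 + Q) (k + 1) true u true + ff k (k + 3 + Q) (k + 1) true u false) =
      k ^ 2 + 2 * k + 10 + Q ^ 2 + 3 * Q := by
  obtain ⟨m, hm⟩ : ∃ m, m = k + 3 + Q := ⟨_, rfl⟩
  obtain ⟨h, hh⟩ : ∃ h : ℕ → ℕ, ∀ u, h u = ff k m (k + 1) true u true + ff k m (k + 1) true u false := ⟨_, fun u => rfl⟩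
  simp_rw [← hm, ← hh]
  have hv : ∀ u, u < m → h u = if u = 0 then 2 * k else if u + 2 ≤ k then 2 * (k - u) + 1 else
      if u + 1 = k then 4 else if u = k then 3 else if u = k + 1 then 3 else if u = k + 2 then 4
      else 2 * (u - k - 1) := by
    intro u hu
    rw [hh]
    simp only [ff, reduceCtorEq, if_true, if_false]
    simp only [fs, fc, ex, fs0]
    grind (splits := 40)
  have h1 : ∀ j, j + 2 ≤ k → ∑ u ∈ range (j + 1), h u + j ^ 2 = 2 * k + 2 * k * j := by
    intro j
    induction j with
    | zero => intro _; simp [hv 0 (by omega)]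
    | succ j ih =>
      intro hj
      rw [sum_range_succ]
      have := ih (by omega)
      obtain ⟨i, rfl⟩ : ∃ i, k = j + 3 + i := ⟨k - (j + 3), by omega⟩
      rw [hv (j + 1) (by omega), if_neg (by omega), if_pos (by omega),
        show j + 3 + i - (j + 1) = i + 2 by omega]
      linarith
  have h2 : ∀ j, j ≤ Q → ∑ u ∈ range (k + 3 + j), h u = k ^ 2 + 2 * k + 10 + j ^ 2 + 3 * j := by
    intro j
    induction j with
    | zero =>
      intro _
      obtain ⟨j, rfl⟩ : ∃ j, k = j + 2 := ⟨k - 2, by omega⟩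
      have := h1 j (by omega)
      rw [show j + 2 + 3 + 0 = j + 1 + 1 + 1 + 1 + 1 by ring, sum_range_succ, sum_range_succ,
        sum_range_succ, sum_range_succ, hv (j + 1) (by omega), hv (j + 1 + 1) (by omega),
        hv (j + 1 + 1 + 1) (by omega), hv (j + 1 + 1 + 1 + 1) (by omega)]
      simp only [add_assoc, Nat.reduceAdd] at *
      simp
      nlinarith
    | succ j ih =>
      intro hj
      rw [← add_assoc, sum_range_succ, ih (by omega), hv _ (by omega)]
      rw [if_neg (by omega), if_neg (by omega), if_neg (by omega), if_neg (by omega),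
        if_neg (by omega), if_neg (by omega), show k + 3 + j - k - 1 = j + 2 by omega]
      ring
  rw [hm]
  exact h2 Q le_rfl

/-- The graph. -/
def GG (k m : ℕ) : SimpleGraph (Fin (2 * m)) where
  Adj x y := if (x : ℕ) % 2 = (y : ℕ) % 2 then As k ((x : ℕ) / 2) ((y : ℕ) / 2)
    else Ac k m ((x : ℕ) / 2) ((y : ℕ) / 2)
  symm := ⟨by
    intro x y h
    by_cases e : (x : ℕ) % 2 = (y : ℕ) % 2
    · rw [if_pos e] at h
      rw [if_pos e.symm]
      unfold As at *
      omega
    · rw [if_neg e] at h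
      rw [if_neg (Ne.symm e)]
      unfold Ac at *
      omega⟩
  loopless := ⟨by
    intro x h
    rw [if_pos rfl] at h
    unfold As at h
    omega⟩

theorem GG_adj (k m : ℕ) (x y : Fin (2 * m)) : (GG k m).Adj x y ↔
    if (x : ℕ) % 2 = (y : ℕ) % 2 then As k ((x : ℕ) / 2) ((y : ℕ) / 2)
    else Ac k m ((x : ℕ) / 2) ((y : ℕ) / 2) := Iff.rfl

/-- Relative row. -/
def rwP (ρ x : ℕ) : Bool := decide (x % 2 = ρ)

theorem GG_adjP (k m ρ : ℕ) (hρ : ρ < 2) (x y : Fin (2 * m)) : (GG k m).Adj x y ↔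
    Aj k m ((x : ℕ) / 2) (rwP ρ x) ((y : ℕ) / 2) (rwP ρ y) := by
  rw [GG_adj]
  unfold Aj
  have : ((x : ℕ) % 2 = (y : ℕ) % 2) ↔ (rwP ρ x = rwP ρ y) := by
    unfold rwP
    rw [decide_eq_decide]
    omega
  simp only [this]

theorem vert_eq (m ρ : ℕ) (hρ : ρ < 2) (x y : Fin (2 * m)) :
    x = y ↔ ((x : ℕ) / 2 = (y : ℕ) / 2 ∧ rwP ρ x = rwP ρ y) := by
  unfold rwP
  rw [decide_eq_decide, Fin.ext_iff]
  omega

theorem vert_ex (m ρ w : ℕ) (hρ : ρ < 2) (hw : w < m) (c : Bool) :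
    ∃ z : Fin (2 * m), (z : ℕ) / 2 = w ∧ rwP ρ z = c := by
  cases c
  · refine ⟨⟨2 * w + (1 - ρ), by omega⟩, ?_, ?_⟩
    · simp only
      omega
    · simp only [rwP, decide_eq_false_iff_not]
      omega
  · refine ⟨⟨2 * w + ρ, by omega⟩, ?_, ?_⟩
    · simp only
      omega
    · simp only [rwP, decide_eq_true_eq]
      omega

theorem GG_dist (k m ρ : ℕ) (hρ : ρ < 2) (hk : 6 ≤ k) (hm : k + 8 ≤ m) (x y : Fin (2 * m)) :
    (GG k m).Reachable x y ∧
      (GG k m).dist x y = ff k m ((x : ℕ) / 2) (rwP ρ x) ((y : ℕ) / 2) (rwP ρ y) := by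
  refine dist_of_local (GG k m)
    (fun x y => ff k m ((x : ℕ) / 2) (rwP ρ x) ((y : ℕ) / 2) (rwP ρ y)) ?_ ?_ ?_ x y
  · intro x
    simp [ff, fs, fs0]
  · intro x y z h
    rw [GG_adjP k m ρ hρ] at h
    exact lipf k m _ _ _ _ _ _ hk hm (by omega) (by omega) (by omega) h
  · intro x y hxy
    rw [ne_eq, vert_eq m ρ hρ] at hxy
    have key : ∃ w c, St k m ((x : ℕ) / 2) (rwP ρ x) ((y : ℕ) / 2) (rwP ρ y) w c :=
      desf k m _ _ _ _ hk hm (by omega) (by omega) hxy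
    obtain ⟨w, c, h1, h2, h3⟩ := key
    obtain ⟨z, rfl, rfl⟩ := vert_ex m ρ w hρ h1 c
    exact ⟨z, (GG_adjP k m ρ hρ _ _).2 h2, h3⟩

theorem GG_del_dist (k m ρ : ℕ) (hρ : ρ < 2) (hk : 6 ≤ k) (hm : k + 8 ≤ m) (v : Fin (2 * m))
    (hv : (v : ℕ) / 2 = k + 1) (hvP : rwP ρ v = true) (x y : {u : Fin (2 * m) // u ≠ v}) :
    (deleteVertex (GG k m) v).Reachable x y ∧
      (deleteVertex (GG k m) v).dist x y =
        gg k m ((x.1 : ℕ) / 2) (rwP ρ x.1) ((y.1 : ℕ) / 2) (rwP ρ y.1) := by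
  have hne : ∀ x : {u : Fin (2 * m) // u ≠ v}, ¬ ((x.1 : ℕ) / 2 = k + 1 ∧ rwP ρ x.1 = true) := by
    intro x h
    apply x.2
    rw [vert_eq m ρ hρ, hv, hvP]
    exact h
  refine dist_of_local (deleteVertex (GG k m) v)
    (fun x y => gg k m ((x.1 : ℕ) / 2) (rwP ρ x.1) ((y.1 : ℕ) / 2) (rwP ρ y.1)) ?_ ?_ ?_ x y
  · intro x
    simp [gg, inc, ff, fs, fs0]
  · intro x y z h
    replace h : (GG k m).Adj y.1 z.1 := h
    rw [GG_adjP k m ρ hρ] at h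
    exact lipg k m _ _ _ _ _ _ hk hm (by omega) (by omega) (by omega) (hne x) (hne y) (hne z) h
  · intro x y hxy
    rw [ne_eq, Subtype.ext_iff, vert_eq m ρ hρ] at hxy
    have key : ∃ w c, Sg k m ((x.1 : ℕ) / 2) (rwP ρ x.1) ((y.1 : ℕ) / 2) (rwP ρ y.1) w c :=
      desg k m _ _ _ _ hk hm (by omega) (by omega) (hne x) (hne y) hxy
    obtain ⟨w, c, h1, h0, h2, h3⟩ := key
    obtain ⟨z, rfl, rfl⟩ := vert_ex m ρ w hρ h1 c
    have hz : z ≠ v := by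
      rintro rfl
      exact h0 ⟨hv, hvP⟩
    exact ⟨⟨z, hz⟩, (GG_adjP k m ρ hρ _ _).2 h2, h3⟩

theorem sum_del {V : Type*} [Fintype V] [DecidableEq V] (f i : V → V → ℕ) (v : V)
    (h0 : f v v = 0) (hs : ∀ x, f x v = f v x) (h1 : ∀ x, i v x = 0) (h2 : ∀ x, i x v = 0)
    (h : ∑ x, ∑ y, i x y = 2 * ∑ x, f v x) :
    ∑ x ∈ univ.erase v, ∑ y ∈ univ.erase v, (f x y + i x y) = ∑ x, ∑ y, f x y := by
  have e : ∀ F : V → ℕ, ∑ x, F x = ∑ x ∈ univ.erase v, F x + F v := fun F =>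
    (sum_erase_add univ F (mem_univ v)).symm
  have e1 : ∑ x, ∑ y, i x y = ∑ x ∈ univ.erase v, ∑ y ∈ univ.erase v, i x y := by
    rw [e]
    simp only [h1, sum_const_zero, add_zero]
    refine sum_congr rfl fun x _ => ?_
    rw [e, h2, add_zero]
  have e2 : ∑ x, ∑ y, f x y =
      ∑ x ∈ univ.erase v, ∑ y ∈ univ.erase v, f x y + 2 * ∑ x, f v x := by
    rw [e]
    have : ∀ x, ∑ y, f x y = ∑ y ∈ univ.erase v, f x y + f v x := by
      intro x
      rw [e, hs]
    rw [sum_congr rfl fun x _ => this x, sum_add_distrib]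
    have := e (f v)
    omega
  simp_rw [sum_add_distrib]
  rw [← e1, h, e2]

theorem sum_ne {V : Type*} [Fintype V] [DecidableEq V] (v : V) (F : V → ℕ)
    (inst : Fintype {u : V // u ≠ v}) : ∑ x : {u : V // u ≠ v}, F x.1 = ∑ x ∈ univ.erase v, F x :=
  (sum_subtype (univ.erase v) (fun x => by simp) F).symm

theorem soltes (k Q ρ : ℕ) (hρ : ρ < 2) (hk : 6 ≤ k) (hQ : 5 ≤ Q)
    (hkQ : 2 * (k + 1) * (Q + 2) = k ^ 2 + 2 * k + 10 + Q ^ 2 + 3 * Q)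
    (v : Fin (2 * (k + 3 + Q))) (hv : (v : ℕ) / 2 = k + 1) (hvP : rwP ρ v = true) :
    IsSoltes (GG k (k + 3 + Q)) v := by
  have hm : k + 8 ≤ k + 3 + Q := by omega
  have hcard : ∃ z : Fin (2 * (k + 3 + Q)), z ≠ v := by
    refine ⟨⟨0, by omega⟩, ?_⟩
    rw [ne_eq, Fin.ext_iff]
    simp only
    omega
  constructor
  · haveI : Nonempty {u : Fin (2 * (k + 3 + Q)) // u ≠ v} := ⟨⟨hcard.choose, hcard.choose_spec⟩⟩
    exact connected_of_reach _ fun x y => (GG_del_dist k _ ρ hρ hk hm v hv hvP x y).1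
  · unfold wiener
    congr 1
    simp_rw [(GG_del_dist k _ ρ hρ hk hm v hv hvP _ _).2, (GG_dist k _ ρ hρ hk hm _ _).2]
    rw [sum_congr rfl fun x _ => sum_ne v (fun y => gg k (k + 3 + Q) ((x.1 : ℕ) / 2) (rwP ρ x.1)
      ((y : ℕ) / 2) (rwP ρ y)) _]
    rw [sum_ne v (fun x => ∑ y ∈ univ.erase v, gg k (k + 3 + Q) ((x : ℕ) / 2) (rwP ρ x)
      ((y : ℕ) / 2) (rwP ρ y)) _]
    refine sum_del (fun x y : Fin (2 * (k + 3 + Q)) => ff k (k + 3 + Q) ((x : ℕ) / 2) (rwP ρ x)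
      ((y : ℕ) / 2) (rwP ρ y)) (fun x y : Fin (2 * (k + 3 + Q)) => inc k ((x : ℕ) / 2) (rwP ρ x)
      ((y : ℕ) / 2) (rwP ρ y)) v ?_ ?_ ?_ ?_ ?_
    · simp [ff, fs, fs0]
    · intro x
      rw [← (GG_dist k _ ρ hρ hk hm _ _).2, ← (GG_dist k _ ρ hρ hk hm _ _).2,
        SimpleGraph.dist_comm]
    · intro x
      simp only [hv, hvP, inc, inc0]
      split_ifs <;> omega
    · intro x
      simp only [hv, hvP, inc, inc0]
      split_ifs <;> omega
    · simp only [hv, hvP]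
      unfold rwP
      rw [sum_rows _ ρ hρ (fun t a => ff k (k + 3 + Q) (k + 1) true t a), trans_sum k Q hk hQ]
      have hin : ∀ t a, ∑ y : Fin (2 * (k + 3 + Q)), inc k t a ((y : ℕ) / 2)
          (decide ((y : ℕ) % 2 = ρ)) = ∑ u ∈ range (k + 3 + Q), (inc k t a u true + inc k t a u false) :=
        fun t a => sum_rows _ ρ hρ (fun u b => inc k t a u b)
      simp_rw [hin]
      rw [sum_rows _ ρ hρ (fun t a => ∑ u ∈ range (k + 3 + Q), (inc k t a u true + inc k t a u false)),
        inc_sum k Q hk, ← hkQ]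
      ring

theorem third (k m t r s c u d : ℕ) (hk : 6 ≤ k) (hm : k + 8 ≤ m) (hr : r < 2) (hd : d < 2)
    (hu : u < m) (ht : t < m) (c1 : t ≠ 0) (c2 : t + 1 ≠ m)
    (hsc : (t = 1 ∧ s = 0 ∧ c = 1 - r) ∨ (t + 1 = k ∧ s = k + 1 ∧ c = r) ∨
         (t = k + 1 ∧ s + 1 = k ∧ c = r) ∨ (t = k + 2 ∧ s = k + 3 ∧ c = 1 - r) ∨
         (t = k + 3 ∧ s = k + 2 ∧ c = 1 - r) ∨ (t + 2 = m ∧ s = t + 1 ∧ c = 1 - r) ∨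
         (t ≠ 1 ∧ t + 1 ≠ k ∧ t ≠ k + 1 ∧ t ≠ k + 2 ∧ t ≠ k + 3 ∧ t + 2 ≠ m ∧ s = t ∧ c = 1 - r)) :
    (if r = d then As k t u else Ac k m t u) ↔
          (u = t - 1 ∧ d = r) ∨ (u = t + 1 ∧ d = r) ∨ (u = s ∧ d = c) := by
  by_cases hrd : r = d
  · subst hrd
    rw [if_pos rfl]
    unfold As
    simp only [and_true]
    rcases hsc with h | h | h | h | h | h | h <;> constructor <;> intro hP <;>
      rcases hP with hP | hP | hP <;> omega
  · rw [if_neg hrd]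
    have e : d = 1 - r := by omega
    have eP : ¬ (d = r) := by omega
    simp only [eP, and_false, false_or]
    unfold Ac
    rcases hsc with h | h | h | h | h | h | h <;> constructor <;> intro hP <;>
      first | omega | (rcases hP with hP | hP | hP <;> omega)

theorem GG_cubic (k m : ℕ) (hk : 6 ≤ k) (hm : k + 8 ≤ m) : IsCubic (GG k m) := by
  intro x
  have key : ∃ p q r : ℕ, p < 2 * m ∧ q < 2 * m ∧ r < 2 * m ∧ p ≠ q ∧ p ≠ r ∧ q ≠ r ∧
      ∀ y : ℕ, y < 2 * m → ((if (x : ℕ) % 2 = y % 2 then As k ((x : ℕ) / 2) (y / 2)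
        else Ac k m ((x : ℕ) / 2) (y / 2)) ↔ y = p ∨ y = q ∨ y = r) := by
    obtain ⟨x, hx⟩ := x
    simp only
    obtain ⟨t, r, rfl, hr⟩ : ∃ t r, x = 2 * t + r ∧ r < 2 := ⟨x / 2, x % 2, by omega, by omega⟩
    have e1 : (2 * t + r) / 2 = t := by omega
    have e2 : (2 * t + r) % 2 = r := by omega
    have aux : ∀ p q s : ℕ, ∀ a b c : ℕ, p < m → q < m → s < m → a < 2 → b < 2 → c < 2 →
        (p ≠ q ∨ a ≠ b) → (p ≠ s ∨ a ≠ c) → (q ≠ s ∨ b ≠ c) →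
        (∀ u d, u < m → d < 2 → ((if r = d then As k t u else Ac k m t u) ↔
          (u = p ∧ d = a) ∨ (u = q ∧ d = b) ∨ (u = s ∧ d = c))) →
        ∃ p q rP : ℕ, p < 2 * m ∧ q < 2 * m ∧ rP < 2 * m ∧ p ≠ q ∧ p ≠ rP ∧ q ≠ rP ∧
        ∀ y : ℕ, y < 2 * m → ((if r = y % 2 then As k t (y / 2)
        else Ac k m t (y / 2)) ↔ y = p ∨ y = q ∨ y = rP) := by
      intro p q s a b c hp hq hs ha hb hc h1 h2 h3 h
      refine ⟨2 * p + a, 2 * q + b, 2 * s + c, by omega, by omega, by omega, by omega, by omega,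
        by omega, ?_⟩
      intro y hy
      rw [h (y / 2) (y % 2) (by omega) (by omega)]
      omega
    rw [e1, e2]
    have htm : t < m := by omega
    by_cases c1 : t = 0
    · refine aux 1 0 1 r (1 - r) (1 - r) (by omega) (by omega) (by omega) (by omega) (by omega)
        (by omega) (by omega) (by omega) (by omega) ?_
      intro u d hu hd
      unfold As Ac
      split_ifs <;> omega
    by_cases c2 : t + 1 = m
    · refine aux (t - 1) t (t - 1) r (1 - r) (1 - r) (by omega) (by omega) (by omega) (by omega)
        (by omega) (by omega) (by omega) (by omega) (by omega) ?_
      intro u d hu hd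
      unfold As Ac
      split_ifs <;> omega
    have hthird : ∃ s c, s < m ∧ c < 2 ∧ (t - 1 ≠ s ∨ r ≠ c) ∧ (t + 1 ≠ s ∨ r ≠ c) ∧
        ((t = 1 ∧ s = 0 ∧ c = 1 - r) ∨ (t + 1 = k ∧ s = k + 1 ∧ c = r) ∨
         (t = k + 1 ∧ s + 1 = k ∧ c = r) ∨ (t = k + 2 ∧ s = k + 3 ∧ c = 1 - r) ∨
         (t = k + 3 ∧ s = k + 2 ∧ c = 1 - r) ∨ (t + 2 = m ∧ s = t + 1 ∧ c = 1 - r) ∨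
         (t ≠ 1 ∧ t + 1 ≠ k ∧ t ≠ k + 1 ∧ t ≠ k + 2 ∧ t ≠ k + 3 ∧ t + 2 ≠ m ∧ s = t ∧ c = 1 - r)) := by
      by_cases d1 : t = 1
      · exact ⟨0, 1 - r, by omega⟩
      by_cases d2 : t + 1 = k
      · exact ⟨k + 1, r, by omega⟩
      by_cases d3 : t = k + 1
      · exact ⟨k - 1, r, by omega⟩
      by_cases d4 : t = k + 2
      · exact ⟨k + 3, 1 - r, by omega⟩
      by_cases d5 : t = k + 3
      · exact ⟨k + 2, 1 - r, by omega⟩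
      by_cases d6 : t + 2 = m
      · exact ⟨t + 1, 1 - r, by omega⟩
      · exact ⟨t, 1 - r, by omega⟩
    obtain ⟨s, c, hs, hc, n1, n2, hsc⟩ := hthird
    refine aux (t - 1) (t + 1) s r r c (by omega) (by omega) (by omega) (by omega)
        (by omega) (by omega) (by omega) (by omega) (by omega) ?_
    intro u d hu hd
    exact third k m t r s c u d hk hm hr hd hu htm c1 c2 hsc
  obtain ⟨p, q, r, hp, hq, hr, h1, h2, h3, h⟩ := key
  rw [Set.ncard_eq_three]
  refine ⟨⟨p, hp⟩, ⟨q, hq⟩, ⟨r, hr⟩, ?_, ?_, ?_, ?_⟩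
  · simpa [Fin.ext_iff] using h1
  · simpa [Fin.ext_iff] using h2
  · simpa [Fin.ext_iff] using h3
  · ext y
    rw [mem_neighborSet, GG_adj, h y y.2]
    simp [Fin.ext_iff]

theorem GG_two (k m : ℕ) (hk : 6 ≤ k) (hm : k + 8 ≤ m) (v : Fin (2 * m)) :
    (deleteVertex (GG k m) v).Connected := by
  obtain ⟨cn, hcn⟩ : ∃ cn : ℕ → ℕ, ∀ i, cn i = if i < m then 2 * i else 2 * (2 * m - 1 - i) + 1 :=
    ⟨_, fun i => rfl⟩
  have hlt : ∀ i, i < 2 * m → cn i < 2 * m := by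
    intro i hi
    rw [hcn]
    split_ifs <;> omega
  obtain ⟨c, hc⟩ : ∃ c : ℕ → Fin (2 * m), ∀ i, i < 2 * m → ((c i : Fin (2 * m)) : ℕ) = cn i := by
    refine ⟨fun i => if h : i < 2 * m then ⟨cn i, hlt i h⟩ else ⟨0, by omega⟩, ?_⟩
    intro i hi
    simp only [dif_pos hi]
  refine ham_delete (GG k m) (2 * m) (by omega) c ?_ ?_ ?_ ?_ v
  · intro x
    by_cases h : (x : ℕ) % 2 = 0
    · refine ⟨(x : ℕ) / 2, by omega, ?_⟩
      rw [Fin.ext_iff, hc _ (by omega), hcn, if_pos (by omega)]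
      omega
    · refine ⟨2 * m - 1 - (x : ℕ) / 2, by omega, ?_⟩
      rw [Fin.ext_iff, hc _ (by omega), hcn, if_neg (by omega)]
      omega
  · intro i j hi hj h
    rw [Fin.ext_iff, hc i hi, hc j hj, hcn, hcn] at h
    split_ifs at h <;> omega
  · intro i hi
    rw [GG_adj, hc _ hi, hc i (by omega), hcn, hcn]
    unfold As Ac
    split_ifs <;> omega
  · rw [GG_adj, hc _ (by omega), hc 0 (by omega), hcn, hcn]
    unfold As Ac
    split_ifs <;> omega

theorem exists_cubic_twoConnected_with_two_soltes_vertices (N : ℕ) :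
    ∃ (n : ℕ) (G : SimpleGraph (Fin n)),
      N < n ∧ G.Connected ∧ IsCubic G ∧ TwoConnected G ∧
      ∃ u₁ u₂ : Fin n, u₁ ≠ u₂ ∧ IsSoltes G u₁ ∧ IsSoltes G u₂ := by
  obtain ⟨k, hkd⟩ : ∃ k, k = N ^ 2 + N + 6 := ⟨_, rfl⟩
  obtain ⟨Q, hQd⟩ : ∃ Q, Q = N ^ 2 + 5 := ⟨_, rfl⟩
  have hk : 6 ≤ k := by omega
  have hQ : 5 ≤ Q := by omega
  have hN : N < k := by
    have := Nat.zero_le (N ^ 2)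
    omega
  have hkQ : 2 * (k + 1) * (Q + 2) = k ^ 2 + 2 * k + 10 + Q ^ 2 + 3 * Q := by
    rw [hkd, hQd]
    ring
  have hm : k + 8 ≤ k + 3 + Q := by omega
  have hconn : (GG k (k + 3 + Q)).Connected := by
    haveI : Nonempty (Fin (2 * (k + 3 + Q))) := ⟨⟨0, by omega⟩⟩
    exact connected_of_reach _ fun x y => (GG_dist k _ 0 (by omega) hk hm x y).1
  refine ⟨2 * (k + 3 + Q), GG k (k + 3 + Q), by omega, hconn, GG_cubic k _ hk hm,
    ⟨hconn, ?_, GG_two k _ hk hm⟩, ⟨2 * (k + 1), by omega⟩, ⟨2 * (k + 1) + 1, by omega⟩, ?_, ?_, ?_⟩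
  · rw [Fintype.card_fin]
    omega
  · rw [ne_eq, Fin.ext_iff]
    simp
  · refine soltes k Q 0 (by omega) hk hQ hkQ _ ?_ ?_
    · simp only
      omega
    · simp only [rwP, decide_eq_true_eq]
      omega
  · refine soltes k Q 1 (by omega) hk hQ hkQ _ ?_ ?_
    · simp only
      omega
    · simp only [rwP, decide_eq_true_eq]
      omega
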